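/- Let z be a standard Gaussian random variable. For any real numbers x, m and any a > 0, E[ z · e^{m|x+az|} · sign(x+az) ] = √(2/π) · e^{−x²/(2a²)} + m·a·E[ e^{m|x+az|} ], where sign(y) = 1 for y > 0 and −1 for y < 0 (the value at y = 0 is irrelevant since x + az ≠ 0 almost surely). -/

import Mathlib

/-!
Against the density `φ z = (√(2π))⁻¹ * exp (-z² / 2)` the integrands are, on either side of the kink
`t = -x / a` of `z ↦ |x + a z|`, multiples of `z * exp (b z - z² / 2)` and `exp (b z - z² / 2)`,
where `b = m a` to the right of `t` and `b = -m a` to the left. Since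
`-(z - b) * exp (b z - z² / 2)` is the derivative of `exp (b z - z² / 2)`, which vanishes at `±∞`,
the fundamental theorem of calculus on the two half-lines
(`integral_Ioi_sub_mul_expGauss`, `integral_Iic_sub_mul_expGauss`) shows that the difference
`E[z e^{m|x+az|} sign(x+az)] - m a E[e^{m|x+az|}]` picks up the boundary value `φ t` from each side,
hence equals `2 φ t`.
-/

open MeasureTheory ProbabilityTheory

/-- The exponentially tilted (unnormalised) Gaussian weight `exp (b z - z² / 2)`. -/
noncomputable def expGauss (b z : ℝ) : ℝ := Real.exp (b * z - z ^ 2 / 2)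

/-- Completing the square: `expGauss b` is a multiple of a Gaussian centred at `b`. -/
lemma expGauss_eq (b z : ℝ) :
    expGauss b z = Real.exp (b ^ 2 / 2) * Real.exp (-(1 / 2) * (z - b) ^ 2) := by
  rw [expGauss, ← Real.exp_add]
  congr 1
  ring

lemma integrable_expGauss (b : ℝ) : Integrable (expGauss b) := by
  have h := ((integrable_exp_neg_mul_sq (b := 1 / 2) (by norm_num)).comp_sub_right b).const_mul
    (Real.exp (b ^ 2 / 2))
  exact h.congr (Filter.Eventually.of_forall fun z ↦ (expGauss_eq b z).symm)

lemma integrable_sub_mul_expGauss (b : ℝ) : Integrable fun z ↦ (z - b) * expGauss b z := by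
  have h := ((integrable_mul_exp_neg_mul_sq (b := 1 / 2) (by norm_num)).comp_sub_right b).const_mul
    (Real.exp (b ^ 2 / 2))
  refine h.congr (Filter.Eventually.of_forall fun z ↦ ?_)
  simp only [expGauss_eq]
  ring

lemma integrable_mul_expGauss (b : ℝ) : Integrable fun z ↦ z * expGauss b z := by
  refine ((integrable_sub_mul_expGauss b).add ((integrable_expGauss b).const_mul b)).congr
    (Filter.Eventually.of_forall fun z ↦ ?_)
  simp only [Pi.add_apply]
  ring

lemma hasDerivAt_expGauss (b z : ℝ) :
    HasDerivAt (expGauss b) (-((z - b) * expGauss b z)) z := by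
  have h : HasDerivAt (fun z : ℝ ↦ b * z - z ^ 2 / 2) (b - z) z := by
    have h := ((hasDerivAt_id z).const_mul b).sub (((hasDerivAt_id z).pow 2).div_const 2)
    refine h.congr_deriv ?_
    simp
  refine h.exp.congr_deriv ?_
  simp only [expGauss]
  ring

lemma integral_Ioi_sub_mul_expGauss (b t : ℝ) :
    ∫ z in Set.Ioi t, (z - b) * expGauss b z = expGauss b t := by
  have hint := (integrable_sub_mul_expGauss b).neg.integrableOn (s := Set.Ioi t)
  have hlim := tendsto_zero_of_hasDerivAt_of_integrableOn_Ioi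
    (fun z _ ↦ hasDerivAt_expGauss b z) hint (integrable_expGauss b).integrableOn
  have h := integral_Ioi_of_hasDerivAt_of_tendsto'
    (fun z _ ↦ hasDerivAt_expGauss b z) hint hlim
  rw [integral_neg] at h
  linarith

lemma integral_Iic_sub_mul_expGauss (b t : ℝ) :
    ∫ z in Set.Iic t, (z - b) * expGauss b z = -expGauss b t := by
  have hint := (integrable_sub_mul_expGauss b).neg.integrableOn (s := Set.Iic t)
  have hlim := tendsto_zero_of_hasDerivAt_of_integrableOn_Iic
    (fun z _ ↦ hasDerivAt_expGauss b z) hint (integrable_expGauss b).integrableOn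
  have h := integral_Iic_of_hasDerivAt_of_tendsto'
    (fun z _ ↦ hasDerivAt_expGauss b z) hint hlim
  rw [integral_neg] at h
  linarith

/-- Gaussian integration-by-parts identity for `z ↦ z e^{m|x+az|} sign(x+az)`. -/
theorem gaussian_sign_exp_identity (x m a : ℝ) (ha : 0 < a) :
    (∫ z, z * Real.exp (m * |x + a * z|) * Real.sign (x + a * z) ∂(gaussianReal 0 1))
      = Real.sqrt (2 / Real.pi) * Real.exp (-x ^ 2 / (2 * a ^ 2))
        + m * a * ∫ z, Real.exp (m * |x + a * z|) ∂(gaussianReal 0 1) := by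
  rw [integral_gaussianReal_eq_integral_smul one_ne_zero,
    integral_gaussianReal_eq_integral_smul one_ne_zero]
  simp only [smul_eq_mul]
  set c : ℝ := (√(2 * Real.pi))⁻¹ with hc
  set t : ℝ := -x / a with ht
  have hat : a * t = -x := by rw [ht]; field_simp
  set P : ℝ → ℝ := fun z ↦ gaussianPDFReal 0 1 z *
    (z * Real.exp (m * |x + a * z|) * Real.sign (x + a * z)) with hP
  set Q : ℝ → ℝ := fun z ↦ gaussianPDFReal 0 1 z * Real.exp (m * |x + a * z|) with hQ
  have hpdf (z : ℝ) : gaussianPDFReal 0 1 z = c * Real.exp (-z ^ 2 / 2) := by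
    simp [gaussianPDFReal, hc]
  have hQr : Set.EqOn (fun z ↦ c * Real.exp (m * x) * expGauss (m * a) z) Q (Set.Ioi t) := by
    intro z hz
    have hpos : 0 < x + a * z := by
      have := mul_lt_mul_of_pos_left (Set.mem_Ioi.1 hz) ha
      linarith
    simp only [hQ, hpdf, abs_of_pos hpos, expGauss, mul_assoc, ← Real.exp_add]
    congr 2
    ring
  have hQl : Set.EqOn (fun z ↦ c * Real.exp (-(m * x)) * expGauss (-(m * a)) z) Q
      (Set.Iio t) := by
    intro z hz
    have hneg : x + a * z < 0 := by
      have := mul_lt_mul_of_pos_left (Set.mem_Iio.1 hz) ha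
      linarith
    simp only [hQ, hpdf, abs_of_neg hneg, expGauss, mul_assoc, ← Real.exp_add]
    congr 2
    ring
  have hPr : Set.EqOn (fun z ↦ c * Real.exp (m * x) * (z * expGauss (m * a) z)) P
      (Set.Ioi t) := by
    intro z hz
    have hpos : 0 < x + a * z := by
      have := mul_lt_mul_of_pos_left (Set.mem_Ioi.1 hz) ha
      linarith
    have h := hQr hz
    simp only [hQ] at h
    simp only [hP, Real.sign_of_pos hpos]
    linear_combination z * h
  have hPl : Set.EqOn (fun z ↦ -(c * Real.exp (-(m * x))) * (z * expGauss (-(m * a)) z)) P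
      (Set.Iio t) := by
    intro z hz
    have hneg : x + a * z < 0 := by
      have := mul_lt_mul_of_pos_left (Set.mem_Iio.1 hz) ha
      linarith
    have h := hQl hz
    simp only [hQ] at h
    simp only [hP, Real.sign_of_neg hneg]
    linear_combination -z * h
  have glue {f : ℝ → ℝ} (hl : IntegrableOn f (Set.Iio t)) (hr : IntegrableOn f (Set.Ioi t)) :
      Integrable f := by
    rw [← integrableOn_univ, ← Set.Iic_union_Ioi (a := t)]
    exact ((integrableOn_Iic_iff_integrableOn_Iio (by simp)).2 hl).union hr
  have hPint : Integrable P := glue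
    (((integrable_mul_expGauss _).const_mul _).integrableOn.congr_fun hPl measurableSet_Iio)
    (((integrable_mul_expGauss _).const_mul _).integrableOn.congr_fun hPr measurableSet_Ioi)
  have hQint : Integrable Q := glue
    (((integrable_expGauss _).const_mul _).integrableOn.congr_fun hQl measurableSet_Iio)
    (((integrable_expGauss _).const_mul _).integrableOn.congr_fun hQr measurableSet_Ioi)
  have hR : ∫ z in Set.Ioi t, (P z - m * a * Q z)
      = c * Real.exp (m * x) * expGauss (m * a) t := by
    rw [← integral_Ioi_sub_mul_expGauss, ← integral_const_mul]
    refine setIntegral_congr_fun measurableSet_Ioi fun z hz ↦ ?_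
    simp only [← hPr hz, ← hQr hz]
    ring
  have hL : ∫ z in Set.Iic t, (P z - m * a * Q z)
      = c * Real.exp (-(m * x)) * expGauss (-(m * a)) t := by
    have h := integral_Iic_sub_mul_expGauss (-(m * a)) t
    rw [← neg_eq_iff_eq_neg] at h
    rw [← h, integral_Iic_eq_integral_Iio, integral_Iic_eq_integral_Iio, ← integral_neg,
      ← integral_const_mul]
    refine setIntegral_congr_fun measurableSet_Iio fun z hz ↦ ?_
    simp only [← hPl hz, ← hQl hz]
    ring
  -- At the kink the factor `exp (±m (x + a t))` is `1`, so both boundary values are `φ t`.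
  have hbr : Real.exp (m * x) * expGauss (m * a) t = Real.exp (-x ^ 2 / (2 * a ^ 2)) := by
    rw [expGauss, ← Real.exp_add]
    congr 1
    rw [ht]
    field_simp
    ring
  have hbl : Real.exp (-(m * x)) * expGauss (-(m * a)) t = Real.exp (-x ^ 2 / (2 * a ^ 2)) := by
    rw [expGauss, ← Real.exp_add]
    congr 1
    rw [ht]
    field_simp
    ring
  have hconst : √(2 / Real.pi) = 2 * c := by
    have hpi := Real.pi_pos
    rw [hc, Real.sqrt_eq_iff_mul_self_eq (by positivity) (by positivity)]
    have hs : √(2 * Real.pi) * √(2 * Real.pi) = 2 * Real.pi :=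
      Real.mul_self_sqrt (by positivity)
    rw [mul_mul_mul_comm, ← mul_inv, hs]
    field_simp
  have hsub : (∫ z, P z) - m * a * ∫ z, Q z = 2 * c * Real.exp (-x ^ 2 / (2 * a ^ 2)) := by
    have hmQ := hQint.const_mul (m * a)
    have hD : Integrable fun z ↦ P z - m * a * Q z := hPint.sub hmQ
    rw [← integral_const_mul, ← integral_sub hPint hmQ,
      ← intervalIntegral.integral_Iic_add_Ioi hD.integrableOn hD.integrableOn (b := t), hL, hR,
      mul_assoc, mul_assoc, hbl, hbr]
    ring
  rw [hconst]
  linarith
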